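/- Let A be a countable commutative ring and x ∈ A. Then there exists an ideal p ⊆ A which is radical, x-prime (1 ∈ p implies x is nilpotent, and ab ∈ p together with (b ∈ p → x nilpotent) implies a ∈ p), x-stable (((a ∈ p → x nilpotent) → x nilpotent) → a ∈ p), and such that x ∈ p if and only if x is nilpotent. -/

import Mathlib

/-!
Write `φ` for "`x` is nilpotent" and let it play the role of falsity. If `φ` fails, some prime ideal
avoids `x`, and relative to `φ` it is prime and stable in the ordinary sense; if `φ` holds, the unit
ideal does the job. Radicality follows from the other properties: if `a ^ k ∈ p` and `a ∈ p` is
refutable, then the factors `a` can be cancelled one at a time down to `1 ∈ p`, which is a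
contradiction, so `a ∈ p` by stability.
-/

section RelativePrimes

variable {A : Type*} [CommSemiring A] {φ : Prop} {p : Ideal A} {a : A}

/-- The notion of a `φ`-prime ideal: a prime ideal with `φ` in place of falsity. Primality is
encoded as cancellation of a factor outside `p` rather than as a disjunction; the `x`-prime ideals
are the case `φ = IsNilpotent x`. -/
structure IsPrimeRelTo (φ : Prop) (p : Ideal A) : Prop where
  of_one_mem : 1 ∈ p → φ
  mem_of_mul_mem : ∀ a b, a * b ∈ p → (b ∈ p → φ) → a ∈ p

/-- The notion of a `φ`-stable ideal: membership is stable under double negation, with `φ` in place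
of falsity. The `x`-stable ideals are the case `φ = IsNilpotent x`. -/
def IsStableRelTo (φ : Prop) (p : Ideal A) : Prop :=
  ∀ a, ((a ∈ p → φ) → φ) → a ∈ p

theorem isPrimeRelTo_top (hφ : φ) : IsPrimeRelTo φ (⊤ : Ideal A) where
  of_one_mem _ := hφ
  mem_of_mul_mem _ _ _ _ := Submodule.mem_top

theorem isStableRelTo_top : IsStableRelTo φ (⊤ : Ideal A) :=
  fun _ _ => Submodule.mem_top

theorem IsPrimeRelTo.of_isPrime (hp : p.IsPrime) (hφ : ¬φ) : IsPrimeRelTo φ p where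
  of_one_mem h := absurd h hp.one_notMem
  mem_of_mul_mem _ _ hab hb := (hp.mem_or_mem hab).resolve_right (mt hb hφ)

theorem isStableRelTo_of_not (hφ : ¬φ) : IsStableRelTo φ p :=
  fun _ ha => by_contra fun hap => hφ (ha fun h => absurd h hap)

theorem IsPrimeRelTo.of_pow_mem (hp : IsPrimeRelTo φ p) (ha : a ∈ p → φ) {k : ℕ}
    (hk : a ^ k ∈ p) : φ := by
  induction k with
  | zero => exact hp.of_one_mem (pow_zero a ▸ hk)
  | succ k ih => exact ih (hp.mem_of_mul_mem _ a (pow_succ a k ▸ hk) ha)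

theorem IsPrimeRelTo.isRadical (hp : IsPrimeRelTo φ p) (hs : IsStableRelTo φ p) : p.IsRadical :=
  fun a ⟨_, hk⟩ => hs a fun ha => hp.of_pow_mem ha hk

theorem exists_isPrimeRelTo_isNilpotent (x : A) :
    ∃ p : Ideal A, IsPrimeRelTo (IsNilpotent x) p ∧ IsStableRelTo (IsNilpotent x) p ∧
      (x ∈ p → IsNilpotent x) := by
  by_cases hx : IsNilpotent x
  · exact ⟨⊤, isPrimeRelTo_top hx, isStableRelTo_top, fun _ => hx⟩
  · obtain ⟨p, hp, hxp⟩ : ∃ p : Ideal A, p.IsPrime ∧ x ∉ p := by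
      simpa only [nilpotent_iff_mem_prime, not_forall, exists_prop] using hx
    exact ⟨p, .of_isPrime hp hx, isStableRelTo_of_not hx, fun h => absurd h hxp⟩

end RelativePrimes

theorem exists_x_prime_ideal_general {A : Type*} [CommSemiring A] (x : A) :
    ∃ p : Ideal A,
      (∀ (a : A) (k : ℕ), a ^ k ∈ p → a ∈ p) ∧
      ((1 : A) ∈ p → IsNilpotent x) ∧
      (∀ a b : A, a * b ∈ p → (b ∈ p → IsNilpotent x) → a ∈ p) ∧
      (∀ a : A, ((a ∈ p → IsNilpotent x) → IsNilpotent x) → a ∈ p) ∧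
      (x ∈ p ↔ IsNilpotent x) := by
  obtain ⟨p, hp, hs, hxp⟩ := exists_isPrimeRelTo_isNilpotent x
  have radical (a : A) (k : ℕ) (hk : a ^ k ∈ p) : a ∈ p := hp.isRadical hs ⟨k, hk⟩
  have mem_iff : x ∈ p ↔ IsNilpotent x := ⟨hxp, fun hx => hs x fun _ => hx⟩
  exact ⟨p, radical, hp.of_one_mem, hp.mem_of_mul_mem, hs, mem_iff⟩

/-- For a countable commutative ring `A` and `x ∈ A`, there is an ideal `p`
which is radical, `x`-prime, `x`-stable, and contains `x` iff `x` is
nilpotent. Negation is interpreted as implication to `x` being nilpotent. -/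
theorem exists_x_prime_ideal {A : Type*} [CommRing A] [Countable A] (x : A) :
    ∃ p : Ideal A,
      (∀ (a : A) (k : ℕ), a ^ k ∈ p → a ∈ p) ∧
      ((1 : A) ∈ p → IsNilpotent x) ∧
      (∀ a b : A, a * b ∈ p → (b ∈ p → IsNilpotent x) → a ∈ p) ∧
      (∀ a : A, ((a ∈ p → IsNilpotent x) → IsNilpotent x) → a ∈ p) ∧
      (x ∈ p ↔ IsNilpotent x) :=
  exists_x_prime_ideal_general x
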